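/- Define p_k = ∫_0^{1/e} (c^{k-1} k^k / k!) · e^{−T(c)+c} dc for k ≥ 2, the limiting probability that the min mean-weight cycle in the directed complete graph has length k. Then Σ_{k≥2} p_k = 1 − e^{−1+1/e}. -/

import Mathlib

open Real

/-- The tree function `T(z) = Σ_{k≥1} k^{k-1} z^k / k!`. -/
noncomputable def treeFun (z : ℝ) : ℝ :=
  ∑' k : ℕ, ((k + 1 : ℕ) : ℝ) ^ k * z ^ (k + 1) / ((k + 1).factorial : ℝ)

/-- The limiting probability that the min mean-weight cycle in the directed complete
graph has length `k`. -/
noncomputable def pLen (k : ℕ) : ℝ :=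
  ∫ c in (0 : ℝ)..(1 / Real.exp 1),
    c ^ (k - 1) * (k : ℝ) ^ k / (k.factorial : ℝ) * Real.exp (-treeFun c + c)

/-!
Write `T z = z * S z`, where `S` is the power series with coefficients `(k + 1) ^ k / (k + 1)!`.
Abel's binomial identity says precisely that `S' = S * T'`, so `S = exp ∘ T` inside the disc of
radius `1 / e`, that is, `T z = z * exp (T z)`. By Stirling's bound the series of `T` still
converges on the boundary, so the functional equation persists there and forces `T (1 / e) = 1`.
Since `∑_{k ≥ 2} c ^ (k - 1) * k ^ k / k! = T' c - 1`, summing the integrands of the `p_k` gives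
the derivative of `-exp (-T c + c)`, and all terms being nonnegative the sum and the integral
commute.
-/

open Finset MeasureTheory

section Abel

variable {R : Type*} [CommRing R]

/- The `(n + 1)`-st forward difference of `x ↦ x ^ n` at `0`, without its term of index `0`. -/
lemma sum_neg_one_pow_mul_choose_mul_succ_pow (n : ℕ) :
    ∑ k ∈ range (n + 1), (-1 : R) ^ (n - k) * ((n + 1).choose (k + 1) : R) * ((k : R) + 1) ^ n =
      if n = 0 then 1 else 0 := by
  rcases eq_or_ne n 0 with rfl | hn
  · simp
  have hdiff := fwdDiff_iter_eq_sum_shift (1 : R) (fun x : R => x ^ n) (n + 1) 0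
  rw [fwdDiff_iter_pow_eq_zero_of_lt n.lt_succ_self, sum_range_succ'] at hdiff
  simpa [hn] using hdiff.symm

/- A form of Abel's binomial identity. Expand `(y - (k + 1)) ^ (n - k)` and collect powers of `y`:
the coefficient of `y ^ (n - m)` is a multiple of the sum in the preceding lemma, so only `m = 0`
survives. -/
theorem sum_choose_mul_succ_pow_mul_sub_pow (y : R) (n : ℕ) :
    ∑ k ∈ range (n + 1),
      ((n + 1).choose (k + 1) : R) * ((k : R) + 1) ^ k * (y - (k + 1)) ^ (n - k) =
        (n + 1) * y ^ n := by
  let term (k j : ℕ) : R := ((n + 1).choose (k + 1) : R) * ((k : R) + 1) ^ k *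
    ((-(k + 1)) ^ j * y ^ (n - k - j) * ((n - k).choose j : R))
  have expand (k : ℕ) (hk : k ∈ range (n + 1)) :
      ((n + 1).choose (k + 1) : R) * ((k : R) + 1) ^ k * (y - (k + 1)) ^ (n - k) =
        ∑ j ∈ range (n + 1 - k), term k j := by
    rw [sub_eq_neg_add, add_pow (-((k : R) + 1)), mul_sum,
      Nat.sub_add_comm (Nat.lt_succ_iff.1 (mem_range.1 hk))]
  have collect (m k : ℕ) (hk : k ∈ range (m + 1)) :
      term k (m - k) = ((n + 1).choose (m + 1) : R) * y ^ (n - m) *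
        ((-1) ^ (m - k) * ((m + 1).choose (k + 1) : R) * ((k : R) + 1) ^ m) := by
    obtain ⟨j, rfl⟩ := Nat.exists_eq_add_of_le (Nat.lt_succ_iff.1 (mem_range.1 hk))
    have hchoose : ((n + 1).choose (k + 1) : R) * ((n - k).choose j : R) =
        ((n + 1).choose (k + j + 1) : R) * ((k + j + 1).choose (k + 1) : R) := by
      have := Nat.choose_mul (n := n + 1) (k := k + j + 1) (s := k + 1) (by omega)
      rw [Nat.add_sub_add_right, show k + j + 1 - (k + 1) = j by omega] at this
      exact_mod_cast congrArg (Nat.cast (R := R)) this.symm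
    simp only [term, Nat.add_sub_cancel_left, Nat.sub_sub, neg_pow ((k : R) + 1), pow_add]
    linear_combination
      (-1) ^ j * ((k : R) + 1) ^ k * ((k : R) + 1) ^ j * y ^ (n - (k + j)) * hchoose
  calc _ = ∑ k ∈ range (n + 1), ∑ j ∈ range (n + 1 - k), term k j := sum_congr rfl expand
    _ = ∑ m ∈ range (n + 1), ∑ k ∈ range (m + 1), term k (m - k) :=
      (sum_range_diag_flip (n + 1) term).symm
    _ = ∑ m ∈ range (n + 1), ((n + 1).choose (m + 1) : R) * y ^ (n - m) *
          if m = 0 then 1 else 0 := by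
      refine sum_congr rfl fun m _ => ?_
      rw [sum_congr rfl (collect m), ← mul_sum, sum_neg_one_pow_mul_choose_mul_succ_pow]
    _ = (n + 1) * y ^ n := by simp

end Abel

section PowerSeries

variable {𝕜 : Type*} [RCLike 𝕜] {a : ℕ → 𝕜} {C r : ℝ} {z : 𝕜}

lemma summable_norm_mul_pow_of_norm_mul_pow_le (ha : ∀ k, ‖a k‖ * r ^ k ≤ C) (hz : ‖z‖ < r) :
    Summable fun k => ‖a k * z ^ k‖ := by
  have hr : 0 < r := (norm_nonneg z).trans_lt hz
  refine .of_nonneg_of_le (fun _ => norm_nonneg _) (fun k => ?_) <|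
    (summable_geometric_of_lt_one (by positivity) ((div_lt_one hr).2 hz)).mul_left C
  calc ‖a k * z ^ k‖ = ‖a k‖ * r ^ k * (‖z‖ / r) ^ k := by
        rw [norm_mul, norm_pow, div_pow]
        field_simp
    _ ≤ C * (‖z‖ / r) ^ k := by gcongr; exact ha k

theorem hasDerivAt_tsum_mul_pow_succ (ha : ∀ k : ℕ, ‖((k : 𝕜) + 1) * a k‖ * r ^ k ≤ C)
    (hz : ‖z‖ < r) :
    HasDerivAt (fun w => ∑' k : ℕ, a k * w ^ (k + 1))
      (∑' k : ℕ, ((k : 𝕜) + 1) * a k * z ^ k) z := by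
  obtain ⟨s, hzs, hsr⟩ := exists_between hz
  have hs : 0 < s := (norm_nonneg z).trans_lt hzs
  have hs_norm : ‖(s : 𝕜)‖ = s := RCLike.norm_of_nonneg hs.le
  refine hasDerivAt_tsum_of_isPreconnected (t := Metric.ball 0 s) (y₀ := 0)
    (g := fun k w => a k * w ^ (k + 1)) (g' := fun k w => ((k : 𝕜) + 1) * a k * w ^ k)
    (summable_norm_mul_pow_of_norm_mul_pow_le ha (hs_norm.trans_lt hsr)) Metric.isOpen_ball
    (convex_ball (0 : 𝕜) s).isPreconnected (fun k w _ => ?_) (fun k w hw => ?_)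
    (Metric.mem_ball_self hs) (by simp) (mem_ball_zero_iff.2 hzs)
  · convert! (hasDerivAt_pow (k + 1) w).const_mul (a k) using 1
    push_cast
    ring
  · rw [norm_mul _ (w ^ k), norm_mul _ ((s : 𝕜) ^ k), norm_pow, norm_pow, hs_norm]
    gcongr
    exact (mem_ball_zero_iff.1 hw).le

end PowerSeries

theorem hasSum_intervalIntegral_of_hasDerivAt_of_nonneg {ι : Type*} [Countable ι]
    {F : ι → ℝ → ℝ} {g g' : ℝ → ℝ} {a b : ℝ} (hab : a ≤ b) (hg : ContinuousOn g (Set.Icc a b))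
    (hderiv : ∀ x ∈ Set.Ioo a b, HasDerivAt g (g' x) x)
    (hF_meas : ∀ i, AEStronglyMeasurable (F i) (volume.restrict (Set.Ioo a b)))
    (hF_nonneg : ∀ i, ∀ x ∈ Set.Ioo a b, 0 ≤ F i x)
    (hF_sum : ∀ x ∈ Set.Ioo a b, HasSum (fun i => F i x) (g' x)) :
    HasSum (fun i => ∫ x in a..b, F i x) (g b - g a) := by
  have hg'_int : IntegrableOn g' (Set.Ioo a b) :=
    (intervalIntegral.integrableOn_deriv_of_nonneg hg hderiv
      fun x hx => (hF_sum x hx).nonneg (hF_nonneg · x hx)).mono_set Set.Ioo_subset_Ioc_self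
  have hftc : ∫ x in Set.Ioo a b, g' x = g b - g a := by
    rw [← integral_Ioc_eq_integral_Ioo, ← intervalIntegral.integral_of_le hab]
    refine intervalIntegral.integral_eq_sub_of_hasDerivAt_of_le hab hg hderiv ?_
    rwa [intervalIntegrable_iff_integrableOn_Ioo_of_le hab]
  have on_Ioo {p : ℝ → Prop} (hp : ∀ x ∈ Set.Ioo a b, p x) :
      ∀ᵐ x ∂volume.restrict (Set.Ioo a b), p x :=
    ae_restrict_of_forall_mem measurableSet_Ioo hp
  simp only [intervalIntegral.integral_of_le hab, integral_Ioc_eq_integral_Ioo]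
  rw [← hftc]
  refine hasSum_integral_of_dominated_convergence F hF_meas
    (fun i => on_Ioo fun x hx => (Real.norm_of_nonneg (hF_nonneg i x hx)).le)
    (on_Ioo fun x hx => (hF_sum x hx).summable) ?_ (on_Ioo hF_sum)
  exact hg'_int.congr (on_Ioo fun x hx => (hF_sum x hx).tsum_eq.symm)

/-- The coefficient of `z ^ (k + 1)` in the tree function. The shift by one avoids the truncated
exponent `n - 1` at `n = 0`. -/
noncomputable def treeCoeff (k : ℕ) : ℝ :=
  ((k : ℝ) + 1) ^ k / ((k + 1).factorial : ℝ)

lemma treeCoeff_nonneg (k : ℕ) : 0 ≤ treeCoeff k := by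
  unfold treeCoeff
  positivity

lemma succ_mul_treeCoeff (k : ℕ) :
    ((k : ℝ) + 1) * treeCoeff k = ((k : ℝ) + 1) ^ (k + 1) / ((k + 1).factorial : ℝ) := by
  rw [treeCoeff, pow_succ]
  ring

lemma treeFun_eq_tsum : treeFun = fun z => ∑' k : ℕ, treeCoeff k * z ^ (k + 1) := by
  ext z
  refine tsum_congr fun k => ?_
  rw [treeCoeff, Nat.cast_succ, div_mul_eq_mul_div]

lemma treeFun_eq_mul_tsum (z : ℝ) : treeFun z = z * ∑' k : ℕ, treeCoeff k * z ^ k := by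
  rw [treeFun_eq_tsum, ← tsum_mul_left]
  exact tsum_congr fun k => by ring

lemma treeFun_zero : treeFun 0 = 0 := by
  rw [treeFun_eq_mul_tsum, zero_mul]

/- Multiplied by `(n + 2)!`, this is Abel's identity at `y = n + 2` with its last term removed. -/
lemma sum_antidiagonal_treeCoeff_mul (n : ℕ) :
    ∑ p ∈ antidiagonal n, treeCoeff p.1 * (((p.2 : ℝ) + 1) * treeCoeff p.2) =
      ((n : ℝ) + 1) * treeCoeff (n + 1) := by
  have habel := sum_choose_mul_succ_pow_mul_sub_pow ((n : ℝ) + 2) (n + 1)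
  rw [sum_range_succ] at habel
  have hterm (k : ℕ) (hk : k ∈ range (n + 1)) :
      treeCoeff k * (((n - k : ℕ) + 1 : ℝ) * treeCoeff (n - k)) =
        ((n + 2).choose (k + 1) * ((k : ℝ) + 1) ^ k * ((n : ℝ) + 2 - (k + 1)) ^ (n + 1 - k)) /
          ((n + 2).factorial : ℝ) := by
    obtain ⟨j, rfl⟩ := Nat.exists_eq_add_of_le (Nat.lt_succ_iff.1 (mem_range.1 hk))
    rw [Nat.cast_choose ℝ (by omega), succ_mul_treeCoeff, treeCoeff,
      show k + j + 2 - (k + 1) = j + 1 by omega, show k + j + 1 - k = j + 1 by omega,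
      Nat.add_sub_cancel_left]
    push_cast
    field_simp
    ring
  rw [Nat.sum_antidiagonal_eq_sum_range_succ
    (fun i j => treeCoeff i * (((j : ℝ) + 1) * treeCoeff j)), sum_congr rfl hterm, ← sum_div,
    treeCoeff, mul_div_assoc']
  congr 1
  push_cast at habel ⊢
  simp only [Nat.choose_self, Nat.sub_self, pow_zero, Nat.cast_one] at habel
  linear_combination habel

lemma succ_mul_treeCoeff_mul_pow_le (k : ℕ) :
    ((k : ℝ) + 1) * treeCoeff k * (1 / exp 1) ^ (k + 1) ≤ 1 / √((k : ℝ) + 1) := by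
  have hsqrt : √((k : ℝ) + 1) ≤ √(2 * π * (k + 1)) := by
    gcongr
    nlinarith [Real.pi_gt_three]
  have hstirling := Stirling.le_factorial_stirling (k + 1)
  push_cast at hstirling
  rw [succ_mul_treeCoeff, div_mul_eq_mul_div, ← mul_pow, mul_one_div,
    div_le_div_iff₀ (by positivity) (by positivity), one_mul, mul_comm]
  exact (mul_le_mul_of_nonneg_right hsqrt (by positivity)).trans hstirling

lemma succ_mul_treeCoeff_mul_pow_le_one (k : ℕ) :
    ((k : ℝ) + 1) * treeCoeff k * (1 / exp 1) ^ (k + 1) ≤ 1 :=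
  (succ_mul_treeCoeff_mul_pow_le k).trans <|
    div_le_one_of_le₀ (Real.one_le_sqrt.2 (by simp)) (Real.sqrt_nonneg _)

lemma norm_succ_mul_treeCoeff_mul_pow_le (k : ℕ) :
    ‖((k : ℝ) + 1) * treeCoeff k‖ * (1 / exp 1) ^ k ≤ exp 1 := by
  have hnonneg := treeCoeff_nonneg k
  rw [Real.norm_of_nonneg (by positivity)]
  have h := succ_mul_treeCoeff_mul_pow_le_one k
  rwa [pow_succ, ← mul_assoc, mul_one_div, div_le_one (exp_pos 1)] at h

lemma norm_treeCoeff_mul_pow_le (k : ℕ) : ‖treeCoeff k‖ * (1 / exp 1) ^ k ≤ exp 1 := by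
  refine le_trans ?_ (norm_succ_mul_treeCoeff_mul_pow_le k)
  have hk : (1 : ℝ) ≤ ‖(k : ℝ) + 1‖ := by
    rw [Real.norm_of_nonneg (by positivity)]
    simp
  rw [norm_mul]
  gcongr
  exact le_mul_of_one_le_left (norm_nonneg _) hk

lemma norm_succ_mul_treeCoeff_succ_mul_pow_le (k : ℕ) :
    ‖((k : ℝ) + 1) * treeCoeff (k + 1)‖ * (1 / exp 1) ^ k ≤ exp 1 ^ 2 := by
  have hnonneg := treeCoeff_nonneg (k + 1)
  have h := norm_succ_mul_treeCoeff_mul_pow_le (k + 1)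
  rw [pow_succ, ← mul_assoc, mul_one_div, div_le_iff₀ (exp_pos 1), ← sq] at h
  refine le_trans ?_ h
  rw [Real.norm_of_nonneg (by positivity), Real.norm_of_nonneg (by positivity)]
  gcongr
  exact k.le_succ

lemma summable_treeCoeff_mul_one_div_exp_pow :
    Summable fun k : ℕ => treeCoeff k * (1 / exp 1) ^ (k + 1) := by
  refine .of_nonneg_of_le (fun k => mul_nonneg (treeCoeff_nonneg k) (by positivity)) (fun k => ?_)
    ((Real.summable_one_div_nat_add_rpow 1 (3 / 2)).2 (by norm_num))
  have hk : (0 : ℝ) < (k : ℝ) + 1 := by positivity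
  rw [abs_of_pos hk, show (3 / 2 : ℝ) = 1 + 1 / 2 by norm_num, Real.rpow_add hk, Real.rpow_one,
    ← Real.sqrt_eq_rpow, mul_comm (_ + 1), ← div_div, le_div_iff₀ hk]
  linarith [succ_mul_treeCoeff_mul_pow_le k]

lemma continuousOn_treeFun : ContinuousOn treeFun (Metric.closedBall 0 (1 / exp 1)) := by
  rw [treeFun_eq_tsum]
  refine continuousOn_tsum (fun k => by fun_prop) summable_treeCoeff_mul_one_div_exp_pow
    fun k z hz => ?_
  rw [norm_mul, norm_pow, Real.norm_of_nonneg (treeCoeff_nonneg k)]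
  have hnonneg := treeCoeff_nonneg k
  gcongr
  exact mem_closedBall_zero_iff.1 hz

lemma summable_norm_treeCoeff_mul_pow {z : ℝ} (hz : |z| < 1 / exp 1) :
    Summable fun k : ℕ => ‖treeCoeff k * z ^ k‖ :=
  summable_norm_mul_pow_of_norm_mul_pow_le norm_treeCoeff_mul_pow_le hz

lemma summable_norm_succ_mul_treeCoeff_mul_pow {z : ℝ} (hz : |z| < 1 / exp 1) :
    Summable fun k : ℕ => ‖((k : ℝ) + 1) * treeCoeff k * z ^ k‖ :=
  summable_norm_mul_pow_of_norm_mul_pow_le norm_succ_mul_treeCoeff_mul_pow_le hz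

lemma hasDerivAt_treeFun {z : ℝ} (hz : |z| < 1 / exp 1) :
    HasDerivAt treeFun (∑' k : ℕ, ((k : ℝ) + 1) * treeCoeff k * z ^ k) z := by
  rw [treeFun_eq_tsum]
  exact hasDerivAt_tsum_mul_pow_succ norm_succ_mul_treeCoeff_mul_pow_le hz

lemma differentiableAt_treeFun {z : ℝ} (hz : |z| < 1 / exp 1) : DifferentiableAt ℝ treeFun z :=
  (hasDerivAt_treeFun hz).differentiableAt

lemma hasSum_deriv_treeFun {z : ℝ} (hz : |z| < 1 / exp 1) :
    HasSum (fun k : ℕ => ((k : ℝ) + 1) * treeCoeff k * z ^ k) (deriv treeFun z) := by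
  rw [(hasDerivAt_treeFun hz).deriv]
  exact (summable_norm_succ_mul_treeCoeff_mul_pow hz).of_norm.hasSum

lemma tsum_succ_mul_treeCoeff_succ_mul_pow {z : ℝ} (hz : |z| < 1 / exp 1) :
    ∑' k : ℕ, ((k : ℝ) + 1) * treeCoeff (k + 1) * z ^ k =
      (∑' k : ℕ, treeCoeff k * z ^ k) * deriv treeFun z := by
  rw [← (hasSum_deriv_treeFun hz).tsum_eq,
    tsum_mul_tsum_eq_tsum_sum_antidiagonal_of_summable_norm
      (summable_norm_treeCoeff_mul_pow hz) (summable_norm_succ_mul_treeCoeff_mul_pow hz)]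
  refine tsum_congr fun n => ?_
  rw [← sum_antidiagonal_treeCoeff_mul, sum_mul]
  refine sum_congr rfl fun p hp => ?_
  rw [← mem_antidiagonal.1 hp, pow_add]
  ring

lemma hasDerivAt_tsum_treeCoeff_mul_pow {z : ℝ} (hz : |z| < 1 / exp 1) :
    HasDerivAt (fun w => ∑' k : ℕ, treeCoeff k * w ^ k)
      ((∑' k : ℕ, treeCoeff k * z ^ k) * deriv treeFun z) z := by
  rw [← tsum_succ_mul_treeCoeff_succ_mul_pow hz]
  have htail : HasDerivAt (fun w => ∑' k : ℕ, treeCoeff (k + 1) * w ^ (k + 1))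
      (∑' k : ℕ, ((k : ℝ) + 1) * treeCoeff (k + 1) * z ^ k) z :=
    hasDerivAt_tsum_mul_pow_succ norm_succ_mul_treeCoeff_succ_mul_pow_le hz
  refine (htail.const_add (treeCoeff 0)).congr_of_eventuallyEq ?_
  filter_upwards [Metric.isOpen_ball.mem_nhds (mem_ball_zero_iff.2 hz)] with w hw
  have hsum := summable_norm_treeCoeff_mul_pow (mem_ball_zero_iff.1 hw)
  rw [hsum.of_norm.tsum_eq_zero_add, pow_zero, mul_one]

theorem tsum_treeCoeff_mul_pow_eq_exp_treeFun {z : ℝ} (hz : |z| < 1 / exp 1) :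
    ∑' k : ℕ, treeCoeff k * z ^ k = exp (treeFun z) := by
  let quotient (w : ℝ) : ℝ := (∑' k : ℕ, treeCoeff k * w ^ k) * exp (-treeFun w)
  have hderiv (w : ℝ) (hw : w ∈ Metric.ball 0 (1 / exp 1)) : HasDerivAt quotient 0 w := by
    have hw' : |w| < 1 / exp 1 := mem_ball_zero_iff.1 hw
    convert! (hasDerivAt_tsum_treeCoeff_mul_pow hw').mul
      (differentiableAt_treeFun hw').hasDerivAt.fun_neg.exp using 1
    ring
  have hconst : quotient z = quotient 0 :=
    Metric.isOpen_ball.is_const_of_deriv_eq_zero (convex_ball 0 (1 / exp 1)).isPreconnected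
      (fun w hw => (hderiv w hw).differentiableAt.differentiableWithinAt)
      (fun w hw => (hderiv w hw).deriv) (mem_ball_zero_iff.2 hz)
      (Metric.mem_ball_self (by positivity))
  have hzero : quotient 0 = 1 := by
    simp only [quotient, treeFun_zero, neg_zero, exp_zero, mul_one]
    rw [tsum_eq_single 0 (fun k hk => by simp [hk])]
    simp [treeCoeff]
  rw [← mul_one (exp (treeFun z)), ← hzero, ← hconst]
  simp only [quotient]
  rw [mul_left_comm, ← exp_add, add_neg_cancel, exp_zero, mul_one]

theorem treeFun_eq_mul_exp_treeFun {z : ℝ} (hz : |z| ≤ 1 / exp 1) :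
    treeFun z = z * exp (treeFun z) := by
  have hball : Set.EqOn treeFun (fun w => w * exp (treeFun w)) (Metric.ball 0 (1 / exp 1)) := by
    intro w hw
    dsimp only
    rw [← tsum_treeCoeff_mul_pow_eq_exp_treeFun (mem_ball_zero_iff.1 hw), treeFun_eq_mul_tsum]
  exact hball.of_subset_closure continuousOn_treeFun
    (continuousOn_id.mul continuousOn_treeFun.rexp) Metric.ball_subset_closedBall
    (closure_ball 0 (by positivity)).ge (mem_closedBall_zero_iff.2 hz)

theorem treeFun_one_div_exp_one : treeFun (1 / exp 1) = 1 := by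
  have hfun := treeFun_eq_mul_exp_treeFun (z := 1 / exp 1) (abs_of_pos (by positivity)).le
  have hexp : exp (treeFun (1 / exp 1) - 1) = treeFun (1 / exp 1) := by
    conv_rhs => rw [hfun]
    rw [exp_sub, one_div_mul_eq_div]
  by_contra hne
  have hlt := Real.add_one_lt_exp (sub_ne_zero.2 hne)
  rw [sub_add_cancel, hexp] at hlt
  exact hlt.false

lemma hasSum_pow_mul_self_pow_div_factorial {c : ℝ} (hc : |c| < 1 / exp 1) :
    HasSum (fun k : ℕ => c ^ (k + 1) * ((k + 2 : ℕ) : ℝ) ^ (k + 2) / ((k + 2).factorial : ℝ))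
      (deriv treeFun c - 1) := by
  have h := (hasSum_nat_add_iff' 1).2 (hasSum_deriv_treeFun hc)
  simp only [succ_mul_treeCoeff] at h ⊢
  convert! h using 1
  · ext k
    push_cast
    ring
  · simp

theorem hasDerivAt_neg_exp_neg_treeFun_add {c : ℝ} (hc : |c| < 1 / exp 1) :
    HasDerivAt (fun x => -exp (-treeFun x + x))
      ((deriv treeFun c - 1) * exp (-treeFun c + c)) c := by
  convert! ((differentiableAt_treeFun hc).hasDerivAt.fun_neg.add (hasDerivAt_id c)).exp.neg using 1
  simp only [Pi.add_apply, id]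
  ring

theorem hasSum_pLen : HasSum (fun k : ℕ => pLen (k + 2)) (1 - exp (-1 + 1 / exp 1)) := by
  have he : (0 : ℝ) < 1 / exp 1 := by positivity
  have hIcc : Set.Icc 0 (1 / exp 1) ⊆ Metric.closedBall 0 (1 / exp 1) := fun c hc =>
    mem_closedBall_zero_iff.2 ((abs_of_nonneg hc.1).trans_le hc.2)
  have hcont : ContinuousOn treeFun (Set.Icc 0 (1 / exp 1)) := continuousOn_treeFun.mono hIcc
  have habs (c : ℝ) (hc : c ∈ Set.Ioo 0 (1 / exp 1)) : |c| < 1 / exp 1 :=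
    (abs_of_pos hc.1).trans_lt hc.2
  have h := hasSum_intervalIntegral_of_hasDerivAt_of_nonneg
    (F := fun k c => c ^ (k + 1) * ((k + 2 : ℕ) : ℝ) ^ (k + 2) / ((k + 2).factorial : ℝ) *
      exp (-treeFun c + c)) he.le (by fun_prop)
    (fun c hc => hasDerivAt_neg_exp_neg_treeFun_add (habs c hc))
    (fun k => ContinuousOn.aestronglyMeasurable
      (by have := hcont.mono Set.Ioo_subset_Icc_self; fun_prop) measurableSet_Ioo)
    (fun k c hc => by have := hc.1; positivity)
    (fun c hc => (hasSum_pow_mul_self_pow_div_factorial (habs c hc)).mul_right _)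
  convert! h using 1
  rw [treeFun_one_div_exp_one, treeFun_zero, neg_zero, add_zero, exp_zero, sub_neg_eq_add,
    neg_add_eq_sub, sub_eq_neg_add 1]

/-- `Σ_{k≥2} p_k = 1 − e^{−1+1/e}`. -/
theorem sum_pLen : ∑' k : ℕ, pLen (k + 2) = 1 - Real.exp (-1 + 1 / Real.exp 1) :=
  hasSum_pLen.tsum_eq
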